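/- For every finite set {B₁, …, B_k} of finite algebras in the language {∧, ∨, ∼, ∇, 0, 1} with the property that a quasi-identity is valid in all of B₁, …, B_k if and only if it is admissible in L₆, one has [20] ≤_m [|B₁|, …, |B_k|] in the multiset ordering. -/

import Mathlib

/-!
The quasi-identities admissible in `L₆` are those valid in the free algebra `F` of term functions
over `L₆`. The proof isolates one quasi-identity `Γ ⇒ x ≈ y` (`isPremises`),

  `x ∧ ∼x ≈ x`, `y ∧ ∼y ≈ y`, `∇x ≈ ∇y`, `∼x ∧ y ≈ x ∧ ∼y`  ⇒  `x ≈ y`,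

which is not admissible, but every refutation of which, in any algebra satisfying all admissible
quasi-identities, involves at least 20 distinct elements. Hence some `B i` refutes it and has at
least 20 elements, which is exactly what `[20] ≤_m [|B₁|, …, |B_k|]` says.

*Not admissible* (`not_admissible_isPremises`). Over `L₆` the premises allow the pair `(x, y)` only
the values `(0,0), (d,d), (a,a), (b,b), (a,b), (b,a)`, the last two being the ones with `x ≠ y`
(`premises_values`). Starting from two free variables, an explicit pair of terms is built that always takes such values, and takes the value
`(a, b)` somewhere.

*Twenty elements* (`twenty_le_card`). Suppose terms `x, y` satisfy `Γ` in `F` and differ at a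
valuation `v`; then `(x, y)(v)` is `(a, b)` or `(b, a)`. Two further valuations come for free:

* collapsing `d, a, b, c` to a single point is an endomorphism of `L₆`, and every valuation has the
  same collapse as some valuation in the subalgebra `{0, d, c, 1}`; there `(x, y)` takes the value
  `(d, d)`;
* at a valuation in the subalgebra `{0, 1}`, the pair `(x, y)` takes the value `(0, 0)`.

The subalgebra of `L₆ × L₆ × L₆` generated by `(a, d, 0)` and `(b, d, 0)` has 20 elements, given by
20 terms in `x, y` (`isSep`), so no two of these terms become equal in `F` unless `x ≈ y` does
(`admissible_isSep`). That is a family of admissible quasi-identities, so in each `B i` the 20 terms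
take distinct values wherever the premises hold and `x ≠ y`.
-/


/-- Terms in the language {∧, ∨, ∼, ∇, 0, 1} over a set `V` of variables. -/
inductive ISTerm (V : Type) : Type
  | var : V → ISTerm V
  | meet : ISTerm V → ISTerm V → ISTerm V
  | join : ISTerm V → ISTerm V → ISTerm V
  | sim : ISTerm V → ISTerm V    -- ∼
  | nabla : ISTerm V → ISTerm V  -- ∇
  | zero : ISTerm V
  | one : ISTerm V

/-- An algebra in the language {∧, ∨, ∼, ∇, 0, 1}. -/
structure ISAlg where
  carrier : Type
  meet : carrier → carrier → carrier
  join : carrier → carrier → carrier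
  sim : carrier → carrier
  nabla : carrier → carrier
  zero : carrier
  one : carrier

/-- Evaluation of a term in an algebra under an assignment of the variables. -/
def ISTerm.eval {V : Type} (A : ISAlg) (v : V → A.carrier) : ISTerm V → A.carrier
  | .var x => v x
  | .meet t s => A.meet (t.eval A v) (s.eval A v)
  | .join t s => A.join (t.eval A v) (s.eval A v)
  | .sim t => A.sim (t.eval A v)
  | .nabla t => A.nabla (t.eval A v)
  | .zero => A.zero
  | .one => A.one

/-- Substitution of terms for variables. -/
def ISTerm.subst {V W : Type} (s : V → ISTerm W) : ISTerm V → ISTerm W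
  | .var x => s x
  | .meet t u => .meet (t.subst s) (u.subst s)
  | .join t u => .join (t.subst s) (u.subst s)
  | .sim t => .sim (t.subst s)
  | .nabla t => .nabla (t.subst s)
  | .zero => .zero
  | .one => .one

/-- Validity of the identity `φ ≈ ψ` in the algebra `A`. -/
def ISIdValid {V : Type} (A : ISAlg) (φ ψ : ISTerm V) : Prop :=
  ∀ v : V → A.carrier, φ.eval A v = ψ.eval A v

/-- Validity of the quasi-identity `Γ ⇒ φ ≈ ψ` in the algebra `A`. -/
def ISQValid (A : ISAlg) (Γ : List (ISTerm ℕ × ISTerm ℕ)) (φ ψ : ISTerm ℕ) : Prop :=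
  ∀ v : ℕ → A.carrier,
    (∀ p ∈ Γ, p.1.eval A v = p.2.eval A v) → φ.eval A v = ψ.eval A v

/-- Admissibility of the quasi-identity `Γ ⇒ φ ≈ ψ` in the algebra `M`. -/
def ISAdmissible (M : ISAlg) (Γ : List (ISTerm ℕ × ISTerm ℕ)) (φ ψ : ISTerm ℕ) : Prop :=
  ∀ s : ℕ → ISTerm ℕ,
    (∀ p ∈ Γ, ISIdValid M (p.1.subst s) (p.2.subst s)) →
    ISIdValid M (φ.subst s) (ψ.subst s)

/-- The Dershowitz–Manna multiset ordering (induced by the usual order on `ℕ`). -/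
def MultisetLE (N N' : Multiset ℕ) : Prop :=
  ∀ x : ℕ, N'.count x < N.count x → ∃ y : ℕ, x < y ∧ N.count y < N'.count y

/-- L₆: the six-element involutive Stone algebra on {0, d, a, b, c, 1}:
0 < d, d < a, d < b, a < c, b < c, c < 1, with a, b incomparable. -/
inductive L6 : Type
  | z  -- 0
  | d
  | a
  | b
  | c
  | u  -- 1
deriving DecidableEq

def L6.meet : L6 → L6 → L6
  | .z, _ => .z
  | _, .z => .z
  | .u, y => y
  | x, .u => x
  | .d, _ => .d
  | _, .d => .d
  | .c, y => y
  | x, .c => x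
  | .a, .a => .a
  | .a, .b => .d
  | .b, .a => .d
  | .b, .b => .b

def L6.join : L6 → L6 → L6
  | .u, _ => .u
  | _, .u => .u
  | .z, y => y
  | x, .z => x
  | .c, _ => .c
  | _, .c => .c
  | .d, y => y
  | x, .d => x
  | .a, .a => .a
  | .a, .b => .c
  | .b, .a => .c
  | .b, .b => .b

/-- ∼ swaps 0 and 1, swaps c and d, and fixes a and b. -/
def L6.sim : L6 → L6
  | .z => .u
  | .u => .z
  | .c => .d
  | .d => .c
  | .a => .a
  | .b => .b

/-- ∇0 = 0 and ∇x = 1 for x ≠ 0. -/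
def L6.nabla : L6 → L6
  | .z => .z
  | _ => .u

def L6alg : ISAlg := ⟨L6, L6.meet, L6.join, L6.sim, L6.nabla, L6.z, L6.u⟩

namespace ISProof

open ISTerm

theorem eval_subst {V W : Type} (A : ISAlg) (s : V → ISTerm W) (v : W → A.carrier)
    (t : ISTerm V) : (t.subst s).eval A v = t.eval A (fun x => (s x).eval A v) := by
  induction t <;> simp_all [ISTerm.subst, ISTerm.eval]

/-! ### Subalgebras and the collapsing endomorphism of `L₆` -/

/-- A subset of `L₆` closed under the operations contains every value of a term at a valuation
inside the subset. -/
theorem eval_mem {V : Type} (S : L6 → Prop)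
    (hm : ∀ p q, S p → S q → S (L6.meet p q)) (hj : ∀ p q, S p → S q → S (L6.join p q))
    (hs : ∀ p, S p → S (L6.sim p)) (hn : ∀ p, S p → S (L6.nabla p))
    (hz : S L6.z) (hu : S L6.u) (v : V → L6) (hv : ∀ x, S (v x)) (t : ISTerm V) :
    S (t.eval L6alg v) := by
  induction t with
  | var x => exact hv x
  | meet t s iht ihs => exact hm _ _ iht ihs
  | join t s iht ihs => exact hj _ _ iht ihs
  | sim t ih => exact hs _ ih
  | nabla t ih => exact hn _ ih
  | zero => exact hz
  | one => exact hu

/-- The endomorphism of `L₆` sending `d, a, b, c` to `a`. -/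
def collapse : L6 → L6
  | .z => .z
  | .u => .u
  | _ => .a

theorem eval_collapse {V : Type} (v : V → L6) (t : ISTerm V) :
    collapse (t.eval L6alg v) = t.eval L6alg (fun x => collapse (v x)) := by
  have hm : ∀ p q, collapse (L6.meet p q) = L6.meet (collapse p) (collapse q) := by
    intro p q; cases p <;> cases q <;> rfl
  have hj : ∀ p q, collapse (L6.join p q) = L6.join (collapse p) (collapse q) := by
    intro p q; cases p <;> cases q <;> rfl
  have hs : ∀ p, collapse (L6.sim p) = L6.sim (collapse p) := by intro p; cases p <;> rfl
  have hn : ∀ p, collapse (L6.nabla p) = L6.nabla (collapse p) := by intro p; cases p <;> rfl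
  induction t with
  | var x => rfl
  | meet t s iht ihs => exact (hm _ _).trans (congrArg₂ L6.meet iht ihs)
  | join t s iht ihs => exact (hj _ _).trans (congrArg₂ L6.join iht ihs)
  | sim t ih => exact (hs _).trans (congrArg L6.sim ih)
  | nabla t ih => exact (hn _).trans (congrArg L6.nabla ih)
  | zero => rfl
  | one => rfl

/-- A map into the subalgebra `{0, d, c, 1}` that does not change the collapse. -/
def toL4 : L6 → L6
  | .z => .z
  | .u => .u
  | _ => .c

theorem collapse_toL4 (p : L6) : collapse (toL4 p) = collapse p := by cases p <;> rfl

theorem collapse_eval_toL4 {V : Type} (v : V → L6) (t : ISTerm V) :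
    collapse (t.eval L6alg (fun x => toL4 (v x))) = collapse (t.eval L6alg v) := by
  rw [eval_collapse, eval_collapse]
  exact congrArg (fun w => t.eval L6alg w) (funext fun x => collapse_toL4 (v x))

theorem eval_toL4 {V : Type} (v : V → L6) (t : ISTerm V) :
    t.eval L6alg (fun x => toL4 (v x)) ≠ L6.a ∧ t.eval L6alg (fun x => toL4 (v x)) ≠ L6.b := by
  refine eval_mem (fun p => p ≠ L6.a ∧ p ≠ L6.b) ?_ ?_ ?_ ?_ (by simp) (by simp) _ ?_ t
  · intro p q; cases p <;> cases q <;> simp [L6.meet]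
  · intro p q; cases p <;> cases q <;> simp [L6.join]
  · intro p; cases p <;> simp [L6.sim]
  · intro p; cases p <;> simp [L6.nabla]
  · intro x; cases v x <;> simp [toL4]

theorem eval_zero {V : Type} (t : ISTerm V) :
    t.eval L6alg (fun _ => L6.z) = L6.z ∨ t.eval L6alg (fun _ => L6.z) = L6.u := by
  refine eval_mem (fun p => p = L6.z ∨ p = L6.u) ?_ ?_ ?_ ?_ (by simp) (by simp) _ ?_ t
  · intro p q; cases p <;> cases q <;> simp [L6.meet]
  · intro p q; cases p <;> cases q <;> simp [L6.join]
  · intro p; cases p <;> simp [L6.sim]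
  · intro p; cases p <;> simp [L6.nabla]
  · simp

/-! ### The critical quasi-identity -/

/-- The premises `x ∧ ∼x ≈ x`, `y ∧ ∼y ≈ y`, `∇x ≈ ∇y`, `∼x ∧ y ≈ x ∧ ∼y`, where `x` and `y` are
the variables `0` and `1`. -/
def isPremises : List (ISTerm ℕ × ISTerm ℕ) :=
  [(meet (var 0) (sim (var 0)), var 0),
   (meet (var 1) (sim (var 1)), var 1),
   (nabla (var 0), nabla (var 1)),
   (meet (sim (var 0)) (var 1), meet (var 0) (sim (var 1)))]

/-- The premises `isPremises` as a condition on two elements of `L₆`. -/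
def Premises (x y : L6) : Prop :=
  L6.meet x (L6.sim x) = x ∧ L6.meet y (L6.sim y) = y ∧ L6.nabla x = L6.nabla y ∧
    L6.meet (L6.sim x) y = L6.meet x (L6.sim y)

theorem isPremises_iff (s : ℕ → ISTerm ℕ) :
    (∀ p ∈ isPremises, ISIdValid L6alg (p.1.subst s) (p.2.subst s)) ↔
      ∀ v : ℕ → L6, Premises ((s 0).eval L6alg v) ((s 1).eval L6alg v) := by
  simp only [isPremises, List.forall_mem_cons, List.not_mem_nil, false_imp_iff, implies_true,
    and_true, ISIdValid, ISTerm.subst, ISTerm.eval, Premises]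
  exact ⟨fun h v => ⟨h.1 v, h.2.1 v, h.2.2.1 v, h.2.2.2 v⟩,
    fun h => ⟨fun v => (h v).1, fun v => (h v).2.1, fun v => (h v).2.2.1, fun v => (h v).2.2.2⟩⟩

theorem premises_values {x y : L6} (h : Premises x y) (hxy : x ≠ y) :
    (x = L6.a ∧ y = L6.b) ∨ (x = L6.b ∧ y = L6.a) := by
  revert h hxy
  cases x <;> cases y <;> simp [Premises, L6.meet, L6.sim, L6.nabla]

/-- The term `g p q = (p ∧ ∼p) ∧ ∇(p ∧ ∼p) ∧ ∇(q ∧ ∼q)`: it is `0` as soon as `p` or `q` is `0` or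
`1`, and lies in `{d, a, b}` otherwise. -/
def gate (p q : ISTerm ℕ) : ISTerm ℕ :=
  meet (meet p (sim p)) (meet (nabla (meet p (sim p))) (nabla (meet q (sim q))))

/-- The term `x ∨ (y ∧ ∼x)`: for `x, y` in `{d, a, b}` it is symmetric in `x` and `y` except at
`(a, b)` and `(b, a)`, where it returns `x`. -/
def amalgam (x y : ISTerm ℕ) : ISTerm ℕ := join x (meet y (sim x))

theorem not_admissible_isPremises : ¬ ISAdmissible L6alg isPremises (var 0) (var 1) := by
  intro h
  let g := gate (var 0) (var 1)
  let g' := gate (var 1) (var 0)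
  let s : ℕ → ISTerm ℕ := fun n => if n = 0 then amalgam g g' else amalgam g' g
  have hs : ∀ v : ℕ → L6, Premises ((s 0).eval L6alg v) ((s 1).eval L6alg v) := by
    intro v
    simp only [s, g, g', gate, amalgam, ISTerm.eval, L6alg, if_true, one_ne_zero, if_false]
    cases v 0 <;> cases v 1 <;> simp [Premises, L6.meet, L6.join, L6.sim, L6.nabla]
  have h' := h s ((isPremises_iff s).2 hs) (fun n => if n = 0 then L6.a else L6.b)
  exact L6.noConfusion (show L6.a = L6.b from h')

/-! ### Twenty terms separated by every refutation -/

/-- Terms for the ten elements below `∇x`, where `x = var 0` and `y = var 1`. At the triple of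
valuations `(a, d, 0)`, `(b, d, 0)` of `x, y`, their first two coordinates are, in order,
`(0,0), (1,1), (a,d), (b,d), (c,d), (d,d), (a,c), (b,c), (c,c), (d,c)`. -/
def isLower : Fin 10 → ISTerm (Fin 2) :=
  ![zero, nabla (var 0),
    var 0, var 1, join (var 0) (var 1), meet (var 0) (var 1),
    meet (sim (var 0)) (nabla (var 0)), meet (sim (var 1)) (nabla (var 0)),
    meet (sim (meet (var 0) (var 1))) (nabla (var 0)),
    meet (sim (join (var 0) (var 1))) (nabla (var 0))]

/-- The twenty separating terms: the ten terms below `∇x`, and their joins with `∼∇x`. -/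
def isSep (i : Fin 10 × Bool) : ISTerm (Fin 2) :=
  if i.2 then join (isLower i.1) (sim (nabla (var 0))) else isLower i.1

/-- The term `isSep i` on the variables `0` and `1` of `ℕ`. -/
def isSepNat (i : Fin 10 × Bool) : ISTerm ℕ := (isSep i).subst (fun j => var j.val)

theorem eval_isSepNat (A : ISAlg) (i : Fin 10 × Bool) (v : ℕ → A.carrier) :
    (isSepNat i).eval A v = (isSep i).eval A ![v 0, v 1] := by
  rw [isSepNat, eval_subst]
  congr 1
  funext j
  fin_cases j <;> rfl

set_option maxRecDepth 100000 in
theorem isSep_injective_ab : ∀ i j : Fin 10 × Bool,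
    (isSep i).eval L6alg ![L6.a, L6.b] = (isSep j).eval L6alg ![L6.a, L6.b] →
    (isSep i).eval L6alg ![L6.d, L6.d] = (isSep j).eval L6alg ![L6.d, L6.d] →
    (isSep i).eval L6alg ![L6.z, L6.z] = (isSep j).eval L6alg ![L6.z, L6.z] → i = j := by
  unfold L6alg
  decide

set_option maxRecDepth 100000 in
theorem isSep_injective_ba : ∀ i j : Fin 10 × Bool,
    (isSep i).eval L6alg ![L6.b, L6.a] = (isSep j).eval L6alg ![L6.b, L6.a] →
    (isSep i).eval L6alg ![L6.d, L6.d] = (isSep j).eval L6alg ![L6.d, L6.d] →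
    (isSep i).eval L6alg ![L6.z, L6.z] = (isSep j).eval L6alg ![L6.z, L6.z] → i = j := by
  unfold L6alg
  decide

/-- If a middle element of `L₆` has the same collapse as `q ∈ {0, d, c, 1}` and `q ≤ ∼q`, then
`q = d`. -/
theorem eq_d {p q : L6} (hp : p = L6.a ∨ p = L6.b) (hc : collapse q = collapse p)
    (hq : q ≠ L6.a ∧ q ≠ L6.b) (hs : L6.meet q (L6.sim q) = q) : q = L6.d := by
  rcases hp with rfl | rfl <;> cases q <;> simp_all [collapse, L6.meet, L6.sim]

theorem eq_z {q : L6} (hq : q = L6.z ∨ q = L6.u) (hs : L6.meet q (L6.sim q) = q) : q = L6.z := by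
  rcases hq with rfl | rfl
  · rfl
  · exact absurd hs (by decide)

/-- Identifying two of the twenty terms on top of the premises forces `x ≈ y`. -/
theorem admissible_isSep {i j : Fin 10 × Bool} (hij : i ≠ j) :
    ISAdmissible L6alg ((isSepNat i, isSepNat j) :: isPremises) (var 0) (var 1) := by
  intro s hs v
  rw [List.forall_mem_cons, isPremises_iff] at hs
  obtain ⟨hsep, hprem⟩ := hs
  have hsep' : ∀ w : ℕ → L6,
      (isSep i).eval L6alg ![(s 0).eval L6alg w, (s 1).eval L6alg w] =
        (isSep j).eval L6alg ![(s 0).eval L6alg w, (s 1).eval L6alg w] := by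
    intro w
    have hsub (i : Fin 10 × Bool) : ((isSepNat i).subst s).eval L6alg w =
        (isSep i).eval L6alg ![(s 0).eval L6alg w, (s 1).eval L6alg w] :=
      (eval_subst L6alg s w (isSepNat i)).trans (eval_isSepNat L6alg i _)
    exact (hsub i).symm.trans ((hsep w).trans (hsub j))
  change (s 0).eval L6alg v = (s 1).eval L6alg v
  by_contra hne
  have hval := premises_values (hprem v) hne
  have hv := hsep' v
  have hw := hsep' (fun x => toL4 (v x))
  have hz := hsep' (fun _ => L6.z)
  have hpw := hprem (fun x => toL4 (v x))
  have hpz := hprem (fun _ => L6.z)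
  rw [eq_z (eval_zero _) hpz.1, eq_z (eval_zero _) hpz.2.1] at hz
  rw [eq_d (by tauto) (collapse_eval_toL4 v (s 0)) (eval_toL4 v _) hpw.1,
    eq_d (by tauto) (collapse_eval_toL4 v (s 1)) (eval_toL4 v _) hpw.2.1] at hw
  rcases hval with ⟨h0, h1⟩ | ⟨h0, h1⟩
  · rw [h0, h1] at hv
    exact hij (isSep_injective_ab i j hv hw hz)
  · rw [h0, h1] at hv
    exact hij (isSep_injective_ba i j hv hw hz)

theorem twenty_le_card (A : ISAlg) [Finite A.carrier]
    (hA : ∀ Γ φ ψ, ISAdmissible L6alg Γ φ ψ → ISQValid A Γ φ ψ)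
    (hne : ¬ ISQValid A isPremises (var 0) (var 1)) : 20 ≤ Nat.card A.carrier := by
  unfold ISQValid at hne
  push Not at hne
  obtain ⟨v, hv, hxy⟩ := hne
  have hinj : Function.Injective (fun i => (isSepNat i).eval A v) := by
    intro i j hij
    by_contra hne
    exact hxy (hA _ _ _ (admissible_isSep hne) v (List.forall_mem_cons.2 ⟨hij, hv⟩))
  simpa using Nat.card_le_card_of_injective _ hinj

end ISProof

theorem statement18 (k : ℕ) (B : Fin k → ISAlg)
    (hfin : ∀ i, Finite (B i).carrier)
    (htest : ∀ (Γ : List (ISTerm ℕ × ISTerm ℕ)) (φ ψ : ISTerm ℕ),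
      (∀ i, ISQValid (B i) Γ φ ψ) ↔ ISAdmissible L6alg Γ φ ψ) :
    MultisetLE ({20} : Multiset ℕ)
      (↑(List.ofFn fun i => Nat.card (B i).carrier)) := by
  have hnot := ISProof.not_admissible_isPremises
  rw [← htest] at hnot
  push Not at hnot
  obtain ⟨i, hi⟩ := hnot
  have := hfin i
  have hcard := ISProof.twenty_le_card (B i) (fun Γ φ ψ h => (htest Γ φ ψ).2 h i) hi
  have hmem : Nat.card (B i).carrier ∈
      ((List.ofFn fun i => Nat.card (B i).carrier : List ℕ) : Multiset ℕ) := by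
    rw [Multiset.mem_coe, List.mem_ofFn]
    exact ⟨i, rfl⟩
  intro x hx
  have hx20 : x = 20 := Multiset.mem_singleton.1 (Multiset.count_pos.1 (by omega))
  subst hx20
  rw [Multiset.count_singleton_self, Nat.lt_one_iff, Multiset.count_eq_zero] at hx
  have hlt : 20 < Nat.card (B i).carrier :=
    lt_of_le_of_ne hcard (fun h => hx (h ▸ hmem))
  refine ⟨_, hlt, ?_⟩
  rw [Multiset.count_singleton, if_neg hlt.ne']
  exact Multiset.count_pos.2 hmem
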